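/- arXiv:math/9207205 — 2 statements merged into one kernel-verified Lean document; each statement's English description precedes it below -/
import Mathlib

section
/- Let (A,B) be a (θ,θ) pair. Then (A,B) is nice if and only if for every family X = {x_u : u < θ} of pairwise disjoint finite subsets of θ and every X-sequence S = ⟨S_α : α < κ⟩, the partial order Q(X,S) is κ.c.c. -/
open Cardinal Set

/-- `a(x) = ⋂ ξ ∈ x, a ξ`  (so `a(∅) = ω`). -/
def inters (a : Ordinal.{0} → Set ℕ) (x : Set Ordinal) : Set ℕ := ⋂ ξ ∈ x, a ξ

/-- `(A,B)`, given by `a ξ` and `b ξ` for `ξ < θ`, is a `(θ,θ)` pair: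
`a ξ ∩ b η` is finite for all `ξ, η < θ`. -/
def IsPair (θ : Cardinal.{0}) (a b : Ordinal.{0} → Set ℕ) : Prop :=
  ∀ ξ < θ.ord, ∀ η < θ.ord, (a ξ ∩ b η).Finite

/-- `x` is a family of θ-many pairwise disjoint finite subsets of `θ`. -/
def DisjFinFam (θ : Cardinal.{0}) (x : Ordinal.{0} → Set Ordinal.{0}) : Prop :=
  (∀ i < θ.ord, (x i).Finite ∧ x i ⊆ Set.Iio θ.ord) ∧
  ∀ i < θ.ord, ∀ j < θ.ord, i ≠ j → Disjoint (x i) (x j)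

/-- The pair `(A,B)` is nice: for every family of θ-many pairwise disjoint finite
subsets of `θ` there are `i, j < θ` with `a(x_i) ∩ b(x_j) ≠ ∅`. -/
def IsNice (θ : Cardinal.{0}) (a b : Ordinal.{0} → Set ℕ) : Prop :=
  ∀ x : Ordinal.{0} → Set Ordinal.{0}, DisjFinFam θ x →
    ∃ i < θ.ord, ∃ j < θ.ord, (inters a (x i) ∩ inters b (x j)).Nonempty

/-- `S` is an `X`-sequence (relative to the fixed sequence `θseq` of cardinals
converging to `θ`): the `S α` (for `α < κ = cof θ`) are pairwise disjoint subsets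
of `θ` with `|S α| > θ_α` and `a(x_i) ∩ b(x_j) = ∅` for all `i, j ∈ S α`. -/
def XSeq (θ : Cardinal.{0}) (θseq : Ordinal.{0} → Cardinal.{0}) (a b : Ordinal.{0} → Set ℕ)
    (x S : Ordinal.{0} → Set Ordinal.{0}) : Prop :=
  (∀ α < θ.ord.cof.ord, S α ⊆ Set.Iio θ.ord) ∧
  (∀ α < θ.ord.cof.ord, ∀ β < θ.ord.cof.ord, α ≠ β → Disjoint (S α) (S β)) ∧
  (∀ α < θ.ord.cof.ord, Cardinal.lift.{1,0} (θseq α) < #(S α)) ∧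
  ∀ α < θ.ord.cof.ord, ∀ i ∈ S α, ∀ j ∈ S α, inters a (x i) ∩ inters b (x j) = ∅

/-- The partial order `Q(X,S)`: finite `F ⊆ κ` such that for all distinct
`α, β ∈ F` there are `i ∈ S α`, `j ∈ S β` with `a(x_i) ∩ b(x_j) ≠ ∅` or
`b(x_i) ∩ a(x_j) ≠ ∅`; `F, K` are compatible iff `F ∪ K ∈ Q(X,S)`. -/
def QSet (θ : Cardinal.{0}) (a b : Ordinal.{0} → Set ℕ) (x S : Ordinal.{0} → Set Ordinal.{0}) :
    Set (Finset Ordinal.{0}) :=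
  {F | (∀ α ∈ F, α < θ.ord.cof.ord) ∧
    ∀ α ∈ F, ∀ β ∈ F, α ≠ β → ∃ i ∈ S α, ∃ j ∈ S β,
      ((inters a (x i) ∩ inters b (x j)).Nonempty ∨
        (inters b (x i) ∩ inters a (x j)).Nonempty)}

/-- A poset of finite sets (with compatibility = union belongs to the poset) is
`κ.c.c.` if it has no antichain of cardinality `κ`. -/
def KCC (κ : Cardinal.{0}) (Q : Set (Finset Ordinal.{0})) : Prop :=
  ¬ ∃ A : Set (Finset Ordinal.{0}),
      A ⊆ Q ∧ (∀ F ∈ A, ∀ K ∈ A, F ≠ K → F ∪ K ∉ Q) ∧ #A = Cardinal.lift.{1,0} κ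

/-!
Call two index sets `s`, `t` separated if `a(x_i) ∩ b(x_j)` and `b(x_i) ∩ a(x_j)` are empty for all
`i ∈ s`, `j ∈ t`. A condition of `Q(X,S)` is then a finite set of `α < κ` whose sets `S α` are
pairwise non-separated.

Given an antichain of size `κ`, the Δ-system lemma lets us remove a common root and leaves `κ` many
disjoint finite sets, any two of which contain some `α` and `β` with `S α` and `S β` separated.
For `i < θ` choose such a set `F i` lying so high in `κ` that `|i| ≤ θ_α` for all `α ∈ F i`, and
choose a point of each `S α`, `α ∈ F i`, injectively in `i`. For each `i`, take the union of the
members of `X` indexed by these points: since some `S α`, `α ∈ F i`, is separated from some `S β`,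
`β ∈ F j`, for all `i, j < θ`, these unions contradict niceness.

Conversely, if `X` witnesses that the pair is not nice, then any two subsets of `θ` are separated,
so splitting `θ` into pieces of size `θ` gives an `X`-sequence for which the singletons are an
antichain.
-/

section Combinatorics

universe u

variable {ι : Type u} {κ : Cardinal.{u}}

theorem exists_maximal_pairwise_subset (r : ι → ι → Prop) (s : Set ι) :
    ∃ t, Maximal (fun t : Set ι => t ⊆ s ∧ t.Pairwise r) t := by
  refine zorn_subset {t | t ⊆ s ∧ t.Pairwise r} fun c hc hchain => ⟨⋃₀ c, ⟨?_, ?_⟩, ?_⟩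
  · exact sUnion_subset fun t ht => (hc ht).1
  · exact (pairwise_sUnion hchain.directedOn).2 fun t ht => (hc ht).2
  · exact fun t ht => subset_sUnion_of_mem ht

theorem exists_pairwise_of_mk_not_rel_lt (hκ : κ.IsRegular) (r : ι → ι → Prop) [Std.Symm r]
    {s : Set ι} (hs : κ ≤ #s) (hr : ∀ x ∈ s, #{y ∈ s | ¬ r x y} < κ) :
    ∃ t ⊆ s, κ ≤ #t ∧ t.Pairwise r := by
  obtain ⟨t, ⟨hts, ht⟩, hmax⟩ := exists_maximal_pairwise_subset r s
  refine ⟨t, hts, not_lt.1 fun ht_small => ?_, ht⟩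
  have hcover : s ⊆ t ∪ ⋃ x ∈ t, {y ∈ s | ¬ r x y} := by
    intro y hy
    by_contra hy'
    simp only [mem_union, mem_iUnion, mem_sep_iff, not_or, not_exists, not_and, not_not] at hy'
    exact hy'.1 <| hmax ⟨insert_subset hy hts, pairwise_insert_of_symm.2
      ⟨ht, fun x hx _ => symm (hy'.2 x hx hy)⟩⟩ (subset_insert y t) (mem_insert y t)
  have hsmall : #(⋃ x ∈ t, {y ∈ s | ¬ r x y} : Set ι) < κ :=
    (card_biUnion_lt_iff_forall_of_isRegular hκ ht_small).2 fun x hx => hr x (hts hx)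
  exact absurd hs <| not_le.2 <| ((mk_le_mk_of_subset hcover).trans (mk_union_le _ _)).trans_lt
    (add_lt_of_lt hκ.aleph0_le ht_small hsmall)

variable [DecidableEq ι]

theorem exists_pairwise_inter_eq_of_mk_mem_lt (hκ : κ.IsRegular) {A : Set (Finset ι)}
    (hA : κ ≤ #A) {R : Finset ι} (hR : ∀ F ∈ A, R ⊆ F)
    (hpt : ∀ p ∉ R, #{F ∈ A | p ∈ F} < κ) :
    ∃ D ⊆ A, κ ≤ #D ∧ D.Pairwise fun F K => F ∩ K = R := by
  have : Std.Symm fun F K : Finset ι => F ∩ K = R :=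
    ⟨fun F K h => (Finset.inter_comm K F).trans h⟩
  refine exists_pairwise_of_mk_not_rel_lt hκ _ hA fun F hF => ?_
  have hsub : {K ∈ A | ¬ F ∩ K = R} ⊆ ⋃ p ∈ (↑(F \ R) : Set ι), {K ∈ A | p ∈ K} := by
    rintro K ⟨hK, hFK⟩
    obtain ⟨p, hp, hpR⟩ := Finset.not_subset.1 fun h : F ∩ K ⊆ R =>
      hFK (h.antisymm (Finset.subset_inter (hR F hF) (hR K hK)))
    rw [Finset.mem_inter] at hp
    exact mem_biUnion (Finset.mem_coe.2 (Finset.mem_sdiff.2 ⟨hp.1, hpR⟩)) ⟨hK, hp.2⟩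
  refine (mk_le_mk_of_subset hsub).trans_lt ?_
  have hfin : #(↑(F \ R) : Set ι) < κ := (F \ R).finite_toSet.lt_aleph0.trans_le hκ.aleph0_le
  exact (card_biUnion_lt_iff_forall_of_isRegular hκ hfin).2 fun p hp =>
    hpt p (Finset.mem_sdiff.1 hp).2

theorem exists_pairwise_inter_eq_of_card_le (hκ : κ.IsRegular) (n : ℕ) (R : Finset ι)
    {A : Set (Finset ι)} (hA : κ ≤ #A) (hR : ∀ F ∈ A, R ⊆ F)
    (hcard : ∀ F ∈ A, F.card ≤ R.card + n) :
    ∃ R', ∃ D ⊆ A, κ ≤ #D ∧ D.Pairwise fun F K => F ∩ K = R' := by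
  induction n generalizing R A with
  | zero =>
    have hA_sub : A.Subsingleton := subsingleton_of_forall_eq R fun F hF =>
      (Finset.eq_of_subset_of_card_le (hR F hF) (hcard F hF)).symm
    exact ⟨R, A, Subset.rfl, hA, hA_sub.pairwise _⟩
  | succ n ih =>
    by_cases hpt : ∀ p ∉ R, #{F ∈ A | p ∈ F} < κ
    · exact ⟨R, exists_pairwise_inter_eq_of_mk_mem_lt hκ hA hR hpt⟩
    · push Not at hpt
      obtain ⟨p, hpR, hp⟩ := hpt
      obtain ⟨R', D, hDA, hD⟩ := ih (insert p R) hp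
        (fun F hF => Finset.insert_subset hF.2 (hR F hF.1)) fun F hF => by
          rw [Finset.card_insert_of_notMem hpR, add_right_comm]
          exact hcard F hF.1
      exact ⟨R', D, hDA.trans (sep_subset _ _), hD⟩

theorem exists_deltaSystem (hκ : κ.IsRegular) (hκ₀ : ℵ₀ < κ) {A : Set (Finset ι)}
    (hA : κ ≤ #A) :
    ∃ R, ∃ D ⊆ A, κ ≤ #D ∧ D.Pairwise fun F K => F ∩ K = R := by
  obtain ⟨n, B, hBA, hB, hn⟩ := infinite_pigeonhole_set (s := A)
    (fun F => (ULift.up F.1.card : ULift.{u} ℕ)) κ hA hκ.aleph0_le (by simpa [hκ.cof_ord])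
  obtain ⟨R, D, hDB, hD⟩ := exists_pairwise_inter_eq_of_card_le hκ n.down ∅ hB
    (fun F _ => Finset.empty_subset F) fun F hF => by simp [← hn hF]
  exact ⟨R, D, hDB.trans hBA, hD⟩

theorem exists_rel_sdiff_of_not_pairwise_union {r : ι → ι → Prop} [Std.Symm r] {F K : Finset ι}
    (hF : (F : Set ι).Pairwise fun α β => ¬ r α β) (hK : (K : Set ι).Pairwise fun α β => ¬ r α β)
    (hFK : ¬ ((F ∪ K : Finset ι) : Set ι).Pairwise fun α β => ¬ r α β) :
    ∃ α ∈ F \ K, ∃ β ∈ K \ F, r α β := by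
  have : Std.Symm fun α β => ¬ r α β := ⟨fun α β h h' => h (symm h')⟩
  rw [Finset.coe_union, pairwise_union_of_symm] at hFK
  push Not at hFK
  obtain ⟨α, hα, β, hβ, hne, hr⟩ := hFK hF hK
  exact ⟨α, Finset.mem_sdiff.2 ⟨hα, fun hα' => hK hα' hβ hne hr⟩,
    β, Finset.mem_sdiff.2 ⟨hβ, fun hβ' => hF hα hβ' hne hr⟩, hr⟩

theorem exists_pairwiseDisjoint_sdiff (hκ : κ.IsRegular) (hκ₀ : ℵ₀ < κ) {r : ι → ι → Prop}
    {A : Set (Finset ι)} (hA : κ ≤ #A) (hrefl : ∀ F ∈ A, ∀ α ∈ F, r α α)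
    (hr : A.Pairwise fun F K => ∃ α ∈ F \ K, ∃ β ∈ K \ F, r α β) :
    ∃ R, ∃ D ⊆ A, κ ≤ #D ∧ D.PairwiseDisjoint (· \ R) ∧
      ∀ F ∈ D, ∀ K ∈ D, ∃ α ∈ F \ R, ∃ β ∈ K \ R, r α β := by
  obtain ⟨R, D, hDA, hD, hroot⟩ := exists_deltaSystem hκ hκ₀ hA
  have sdiff_root {F K} (hF : F ∈ D) (hK : K ∈ D) (hne : F ≠ K) : F \ R = F \ K := by
    rw [← hroot hF hK hne, Finset.sdiff_inter_self_left]
  have hrel {F K} (hF : F ∈ D) (hK : K ∈ D) (hne : F ≠ K) :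
      ∃ α ∈ F \ R, ∃ β ∈ K \ R, r α β := by
    rw [sdiff_root hF hK hne, sdiff_root hK hF hne.symm]
    exact hr (hDA hF) (hDA hK) hne
  refine ⟨R, D, hDA, hD, fun F hF K hK hne => ?_, fun F hF K hK => ?_⟩
  · simp only [Function.onFun, sdiff_root hF hK hne]
    exact Finset.sdiff_disjoint.mono_right Finset.sdiff_subset
  · obtain rfl | hne := eq_or_ne F K
    · have hD_nontrivial : D.Nontrivial :=
        nontrivial_coe_sort.1 (one_lt_iff_nontrivial.1 (one_lt_aleph0.trans (hκ₀.trans_le hD)))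
      obtain ⟨K, hK, hne⟩ := hD_nontrivial.exists_ne F
      obtain ⟨α, hα, -⟩ := hrel hF hK hne.symm
      exact ⟨α, hα, α, hα, hrefl F (hDA hF) α (Finset.sdiff_subset hα)⟩
    · exact hrel hF hK hne

end Combinatorics

section CardinalLemmas

universe u

theorem exists_disjoint_of_mk_lt {ι α : Type u} {D : Set ι} {f : ι → Set α}
    (hD : D.PairwiseDisjoint f) {B : Set α} (hB : #B < #D) : ∃ i ∈ D, Disjoint (f i) B := by
  by_contra! hmeet
  choose g hgf hgB using fun i : D => not_disjoint_iff.1 (hmeet i i.2)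
  refine hB.not_ge (mk_le_of_injective (f := fun i => (⟨g i, hgB i⟩ : B)) fun i j hij => ?_)
  have hg : g i = g j := congrArg Subtype.val hij
  exact Subtype.ext (hD.elim_set i.2 j.2 (g i) (hgf i) (hg ▸ hgf j))

theorem exists_forall_ge_of_pairwiseDisjoint {ι : Type (u + 1)} {D : Set ι}
    {f : ι → Finset Ordinal.{u}} (hf : D.PairwiseDisjoint f) {κ : Cardinal.{u}}
    (hD : Cardinal.lift.{u + 1} κ ≤ #D) {β : Ordinal.{u}} (hβ : β < κ.ord) :
    ∃ i ∈ D, ∀ α ∈ f i, β ≤ α := by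
  have hIio : #(Iio β) < #D := hD.trans_lt' <| by
    rw [mk_Iio_ordinal, Cardinal.lift_lt]
    exact lt_ord.1 hβ
  obtain ⟨i, hi, hiβ⟩ := exists_disjoint_of_mk_lt (f := fun i => (f i : Set Ordinal.{u}))
    (fun i hi j hj hne => Finset.disjoint_coe.2 (hf hi hj hne)) hIio
  exact ⟨i, hi, fun α hα => not_lt.1 (disjoint_left.1 hiβ hα)⟩

theorem exists_mapsTo_injOn_of_mk_le {α β : Type u} [Nonempty β] {s : Set α} {t : Set β}
    (h : #s ≤ #t) : ∃ f : α → β, MapsTo f s t ∧ InjOn f s := by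
  obtain ⟨f⟩ := h
  obtain ⟨g, hg⟩ : ∃ g : α → β, ∀ x : s, g x = f x :=
    ⟨Function.extend Subtype.val (fun x => (f x : β)) fun _ => Classical.arbitrary β,
      Subtype.val_injective.extend_apply _ _⟩
  refine ⟨g, fun x hx => hg ⟨x, hx⟩ ▸ (f ⟨x, hx⟩).2, injOn_iff_injective.2 ?_⟩
  rw [show s.domRestrict g = Subtype.val ∘ f from funext hg]
  exact Subtype.val_injective.comp f.injective

theorem exists_mapsTo_injOn_card_le {c : Cardinal.{u}} {s : Set Ordinal.{u}}
    (hs : Cardinal.lift.{u + 1} c < #s) :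
    ∃ e : Ordinal.{u} → Ordinal.{u}, MapsTo e {i | i.card ≤ c} s ∧ InjOn e {i | i.card ≤ c} := by
  have hIio : {i : Ordinal.{u} | i.card ≤ c} = Iio (Order.succ c).ord := by
    ext i
    rw [mem_ofPred_eq, mem_Iio, lt_ord, Order.lt_succ_iff]
  refine exists_mapsTo_injOn_of_mk_le ?_
  rw [hIio, mk_Iio_ordinal, card_ord, Cardinal.lift_succ]
  exact Order.succ_le_of_lt hs

theorem exists_pairwise_disjoint_le_mk {c : Cardinal.{u}} (hc : ℵ₀ ≤ c) :
    ∃ S : Ordinal.{u} → Set Ordinal.{u}, (∀ α, S α ⊆ Iio c.ord) ∧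
      Pairwise (fun α β => Disjoint (S α) (S β)) ∧
      ∀ α < c.ord, Cardinal.lift.{u + 1} c ≤ #(S α) := by
  have hmk : #(Iio c.ord) = Cardinal.lift.{u + 1} c := by rw [mk_Iio_ordinal, card_ord]
  have hprod : #(Iio c.ord × Iio c.ord) = #(Iio c.ord) := by
    rw [mk_prod, Cardinal.lift_id, hmk, mul_eq_self (aleph0_le_lift.2 hc)]
  obtain ⟨e⟩ := Cardinal.eq.1 hprod
  refine ⟨fun α => Subtype.val '' {z | ((e.symm z).1 : Ordinal) = α}, ?_, ?_, fun α hα => ?_⟩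
  · rintro α _ ⟨z, -, rfl⟩
    exact z.2
  · intro α β hne
    exact (disjoint_image_iff Subtype.val_injective).2
      (disjoint_left.2 fun z hzα hzβ => hne (hzα.symm.trans hzβ))
  · rw [mk_image_eq Subtype.val_injective, ← hmk]
    refine mk_le_of_injective
      (f := fun y => ⟨e (⟨α, hα⟩, y), by rw [mem_ofPred_eq, e.symm_apply_apply]⟩)
      fun y y' hy => ?_
    exact congrArg Prod.snd (e.injective (congrArg Subtype.val hy))

theorem exists_forall_lt_of_lt_csSup_image {α β : Type*} [Preorder α]
    [ConditionallyCompleteLinearOrder β] {f : α → β} {s : Set α} (hf : MonotoneOn f s)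
    (hs : s.Nonempty) {c : β} (hc : c < sSup (f '' s)) : ∃ x ∈ s, ∀ y ∈ s, x ≤ y → c < f y := by
  obtain ⟨_, ⟨x, hx, rfl⟩, hcx⟩ := exists_lt_of_lt_csSup (hs.image f) hc
  exact ⟨x, hx, fun y hy hxy => hcx.trans_le (hf hx hy hxy)⟩

theorem lt_csSup_image_of_strictMonoOn {α β : Type*} [LinearOrder α] [SuccOrder α]
    [ConditionallyCompleteLinearOrder β] {f : α → β} {o : α} (ho : Order.IsSuccLimit o)
    (hf : StrictMonoOn f (Iio o)) (hbdd : BddAbove (f '' Iio o)) {x : α} (hx : x < o) :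
    f x < sSup (f '' Iio o) :=
  (hf hx (ho.succ_lt hx) (Order.lt_succ_of_not_isMax hx.not_isMax)).trans_le
    (le_csSup hbdd (mem_image_of_mem f (ho.succ_lt hx)))

end CardinalLemmas

section Separation

/-- The index sets `s` and `t` are separated along the family `x` if `a(x_i)` misses `b(x_j)` and
`b(x_i)` misses `a(x_j)` for all `i ∈ s`, `j ∈ t`. Both conditions are included so that failure of
separation of `S α` and `S β` is exactly the relation required of distinct `α, β ∈ F` in `QSet`. -/
def Separated (a b : Ordinal.{0} → Set ℕ) (x : Ordinal.{0} → Set Ordinal.{0})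
    (s t : Set Ordinal.{0}) : Prop :=
  ∀ i ∈ s, ∀ j ∈ t, inters a (x i) ∩ inters b (x j) = ∅ ∧ inters b (x i) ∩ inters a (x j) = ∅

variable {a b : Ordinal.{0} → Set ℕ} {x S : Ordinal.{0} → Set Ordinal.{0}}
  {s t s' t' : Set Ordinal.{0}} {θ : Cardinal.{0}}

theorem Separated.symm (h : Separated a b x s t) : Separated a b x t s := fun j hj i hi => by
  rw [inter_comm (inters a (x j)), inter_comm (inters b (x j))]
  exact (h i hi j hj).symm

theorem Separated.mono (hs : s' ⊆ s) (ht : t' ⊆ t) (h : Separated a b x s t) :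
    Separated a b x s' t' :=
  fun i hi j hj => h i (hs hi) j (ht hj)

theorem separated_self_iff :
    Separated a b x s s ↔ ∀ i ∈ s, ∀ j ∈ s, inters a (x i) ∩ inters b (x j) = ∅ :=
  ⟨fun h i hi j hj => (h i hi j hj).1,
    fun h i hi j hj => ⟨h i hi j hj, inter_comm (inters a (x j)) _ ▸ h j hj i hi⟩⟩

theorem not_separated_iff :
    ¬ Separated a b x s t ↔ ∃ i ∈ s, ∃ j ∈ t, (inters a (x i) ∩ inters b (x j)).Nonempty ∨
      (inters b (x i) ∩ inters a (x j)).Nonempty := by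
  simp only [Separated, nonempty_iff_ne_empty, not_forall, not_and_or, exists_prop]

theorem mem_qSet_iff {F : Finset Ordinal.{0}} :
    F ∈ QSet θ a b x S ↔ (∀ α ∈ F, α < θ.ord.cof.ord) ∧
      (F : Set Ordinal).Pairwise fun α β => ¬ Separated a b x (S α) (S β) := by
  simp only [not_separated_iff]
  rfl

end Separation

section Families

variable {θ : Cardinal.{0}} {a b : Ordinal.{0} → Set ℕ} {x T : Ordinal.{0} → Set Ordinal.{0}}

theorem inters_anti (a : Ordinal.{0} → Set ℕ) : Antitone (inters a) :=
  fun _ _ h => biInter_subset_biInter_left h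

theorem DisjFinFam.biUnion (hx : DisjFinFam θ x) (hT : DisjFinFam θ T) :
    DisjFinFam θ fun i => ⋃ k ∈ T i, x k := by
  refine ⟨fun i hi => ⟨?_, ?_⟩, fun i hi j hj hij => ?_⟩
  · exact (hT.1 i hi).1.biUnion fun k hk => (hx.1 k ((hT.1 i hi).2 hk)).1
  · exact iUnion₂_subset fun k hk => (hx.1 k ((hT.1 i hi).2 hk)).2
  · simp only [disjoint_iUnion_left, disjoint_iUnion_right]
    exact fun l hl k hk => hx.2 k ((hT.1 i hi).2 hk) l ((hT.1 j hj).2 hl)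
      ((hT.2 i hi j hj hij).ne_of_mem hk hl)

theorem IsNice.exists_forall_inter_nonempty (h : IsNice θ a b) (hx : DisjFinFam θ x)
    (hT : DisjFinFam θ T) : ∃ i < θ.ord, ∃ j < θ.ord, ∀ k ∈ T i, ∀ l ∈ T j,
      (inters a (x k) ∩ inters b (x l)).Nonempty := by
  obtain ⟨i, hi, j, hj, hij⟩ := h _ (hx.biUnion hT)
  exact ⟨i, hi, j, hj, fun k hk l hl => hij.mono (inter_subset_inter
    (inters_anti a (subset_biUnion_of_mem hk)) (inters_anti b (subset_biUnion_of_mem hl)))⟩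

theorem exists_disjFinFam_forall_inter_nonempty {ι : Type*} {I : Set ι} {S : ι → Set Ordinal.{0}}
    {c : ι → Cardinal.{0}} {F : Ordinal.{0} → Finset ι} (hSθ : ∀ α ∈ I, S α ⊆ Iio θ.ord)
    (hS : I.PairwiseDisjoint S) (hcard : ∀ α ∈ I, Cardinal.lift.{1} (c α) < #(S α))
    (hF : ∀ i < θ.ord, ∀ α ∈ F i, α ∈ I ∧ i.card ≤ c α) :
    ∃ T, DisjFinFam θ T ∧ ∀ i < θ.ord, ∀ α ∈ F i, (T i ∩ S α).Nonempty := by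
  choose! e he_maps he_inj using fun α hα => exists_mapsTo_injOn_card_le (hcard α hα)
  have he {i α} (hi : i < θ.ord) (hα : α ∈ F i) : e α i ∈ S α :=
    he_maps α (hF i hi α hα).1 (hF i hi α hα).2
  refine ⟨fun i => (e · i) '' F i, ⟨fun i hi => ⟨(F i).finite_toSet.image _, ?_⟩, ?_⟩, ?_⟩
  · rintro _ ⟨α, hα, rfl⟩
    exact hSθ α (hF i hi α hα).1 (he hi hα)
  · refine fun i hi j hj hij => disjoint_left.2 ?_
    rintro _ ⟨α, hα, rfl⟩ ⟨β, hβ, heq : e β j = e α i⟩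
    obtain ⟨hαI, hi_card⟩ := hF i hi α hα
    obtain ⟨hβI, hj_card⟩ := hF j hj β hβ
    obtain rfl : α = β := hS.elim_set hαI hβI (e α i) (he hi hα) (heq ▸ he hj hβ)
    exact hij (he_inj α hαI hi_card hj_card heq.symm)
  · exact fun i hi α hα => ⟨e α i, mem_image_of_mem _ hα, he hi hα⟩

end Families

section ChainCondition

variable {θ : Cardinal.{0}} {θseq : Ordinal.{0} → Cardinal.{0}} {a b : Ordinal.{0} → Set ℕ}
  {x S : Ordinal.{0} → Set Ordinal.{0}}

theorem exists_pairwiseDisjoint_sdiff_of_not_kcc (hκ : ℵ₀ < θ.ord.cof)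
    (hS : ∀ α < θ.ord.cof.ord, Separated a b x (S α) (S α))
    (h : ¬ KCC θ.ord.cof (QSet θ a b x S)) :
    ∃ R, ∃ D ⊆ QSet θ a b x S, Cardinal.lift.{1} θ.ord.cof ≤ #D ∧ D.PairwiseDisjoint (· \ R) ∧
      ∀ F ∈ D, ∀ K ∈ D, ∃ α ∈ F \ R, ∃ β ∈ K \ R, Separated a b x (S α) (S β) := by
  obtain ⟨A, hAQ, hanti, hA⟩ := not_not.1 h
  have hreg : θ.ord.cof.IsRegular :=
    isRegular_cof (isSuccLimit_ord (hκ.le.trans (Ordinal.cof_ord_le θ)))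
  have hκ_lift : ℵ₀ < Cardinal.lift.{1} θ.ord.cof := by
    rwa [← Cardinal.lift_aleph0.{1, 0}, Cardinal.lift_lt]
  have : Std.Symm fun α β => Separated a b x (S α) (S β) := ⟨fun _ _ h => h.symm⟩
  obtain ⟨R, D, hDA, hD⟩ := exists_pairwiseDisjoint_sdiff hreg.lift hκ_lift hA.ge
    (fun F hF α hα => hS α ((hAQ hF).1 α hα)) fun F hF K hK hne => by
      obtain ⟨hFκ, hF_pw⟩ := mem_qSet_iff.1 (hAQ hF)
      obtain ⟨hKκ, hK_pw⟩ := mem_qSet_iff.1 (hAQ hK)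
      refine exists_rel_sdiff_of_not_pairwise_union hF_pw hK_pw fun hFK => ?_
      exact hanti F hF K hK hne <| mem_qSet_iff.2
        ⟨fun α hα => (Finset.mem_union.1 hα).elim (hFκ α) (hKκ α), hFK⟩
  exact ⟨R, D, hDA.trans hAQ, hD⟩

theorem IsNice.kcc_qSet (h : IsNice θ a b) (hκ : ℵ₀ < θ.ord.cof)
    (hθ : ∀ c < θ, ∃ β < θ.ord.cof.ord, ∀ α < θ.ord.cof.ord, β ≤ α → c < θseq α)
    (hx : DisjFinFam θ x) (hS : XSeq θ θseq a b x S) : KCC θ.ord.cof (QSet θ a b x S) := by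
  obtain ⟨hSθ, hS_disj, hS_card, hS_sep⟩ := hS
  by_contra hcc
  obtain ⟨R, D, hDQ, hD_card, hD_disj, hD_sep⟩ := exists_pairwiseDisjoint_sdiff_of_not_kcc hκ
    (fun α hα => separated_self_iff.2 (hS_sep α hα)) hcc
  have hDκ {F α} (hF : F ∈ D) (hα : α ∈ F \ R) : α < θ.ord.cof.ord :=
    (hDQ hF).1 α (Finset.sdiff_subset hα)
  have hhigh : ∀ i < θ.ord, ∃ F ∈ D, ∀ α ∈ F \ R, i.card ≤ θseq α := fun i hi => by
    obtain ⟨β, hβ, hβ_le⟩ := hθ i.card (lt_ord.1 hi)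
    obtain ⟨F, hF, hβF⟩ := exists_forall_ge_of_pairwiseDisjoint hD_disj hD_card hβ
    exact ⟨F, hF, fun α hα => (hβ_le α (hDκ hF hα) (hβF α hα)).le⟩
  choose! F hFD hF_card using hhigh
  obtain ⟨T, hT, hTS⟩ := exists_disjFinFam_forall_inter_nonempty (F := fun i => F i \ R)
    hSθ (fun α hα β hβ hne => hS_disj α hα β hβ hne) hS_card
    fun i hi α hα => ⟨hDκ (hFD i hi) hα, hF_card i hi α hα⟩
  obtain ⟨i, hi, j, hj, hij⟩ := h.exists_forall_inter_nonempty hx hT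
  obtain ⟨α, hα, β, hβ, hαβ⟩ := hD_sep (F i) (hFD i hi) (F j) (hFD j hj)
  obtain ⟨k, hkT, hkS⟩ := hTS i hi α hα
  obtain ⟨l, hlT, hlS⟩ := hTS j hj β hβ
  exact (hij k hkT l hlT).ne_empty (hαβ k hkS l hlS).1

theorem not_kcc_qSet_of_pairwise_separated
    (h : (Iio θ.ord.cof.ord).Pairwise fun α β => Separated a b x (S α) (S β)) :
    ¬ KCC θ.ord.cof (QSet θ a b x S) := by
  refine not_not.2 ⟨(fun α => {α}) '' Iio θ.ord.cof.ord, ?_, ?_, ?_⟩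
  · rintro _ ⟨α, hα, rfl⟩
    exact mem_qSet_iff.2 ⟨by simpa using hα, by simp⟩
  · rintro _ ⟨α, hα, rfl⟩ _ ⟨β, hβ, rfl⟩ hne hQ
    have hαβ : α ≠ β := fun h => hne (congrArg _ h)
    exact (mem_qSet_iff.1 hQ).2 (by simp) (by simp) hαβ (h hα hβ hαβ)
  · rw [mk_image_eq Finset.singleton_injective, mk_Iio_ordinal, card_ord]

theorem isNice_of_forall_kcc_qSet (hθ₀ : ℵ₀ ≤ θ) (hθ : ∀ α < θ.ord.cof.ord, θseq α < θ)
    (h : ∀ x S : Ordinal.{0} → Set Ordinal.{0}, DisjFinFam θ x → XSeq θ θseq a b x S →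
      KCC θ.ord.cof (QSet θ a b x S)) : IsNice θ a b := by
  by_contra hnice
  simp only [IsNice, not_forall, not_exists, not_and, not_nonempty_iff_eq_empty] at hnice
  obtain ⟨x, hx, hx_sep⟩ := hnice
  obtain ⟨S, hSθ, hS_disj, hS_card⟩ := exists_pairwise_disjoint_le_mk hθ₀
  have hS_sep (α β) : Separated a b x (S α) (S β) :=
    (separated_self_iff.2 hx_sep).mono (hSθ α) (hSθ β)
  have hXSeq : XSeq θ θseq a b x S := by
    refine ⟨fun α _ => hSθ α, fun α _ β _ hne => hS_disj hne, fun α hα => ?_, fun α _ =>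
      separated_self_iff.1 (hS_sep α α)⟩
    exact (Cardinal.lift_lt.2 (hθ α hα)).trans_le
      (hS_card α (hα.trans_le (ord_le_ord.2 (Ordinal.cof_ord_le θ))))
  exact not_kcc_qSet_of_pairwise_separated (fun α _ β _ _ => hS_sep α β) (h x S hx hXSeq)

theorem statement4_general (hκ : ℵ₀ < θ.ord.cof) (hmono : StrictMonoOn θseq (Iio θ.ord.cof.ord))
    (hsup : sSup (θseq '' Iio θ.ord.cof.ord) = θ) :
    IsNice θ a b ↔
      ∀ x S : Ordinal.{0} → Set Ordinal.{0}, DisjFinFam θ x →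
        XSeq θ θseq a b x S → KCC θ.ord.cof (QSet θ a b x S) := by
  have hlim : Order.IsSuccLimit θ.ord.cof.ord := isSuccLimit_ord hκ.le
  have hθ_lt : ∀ α < θ.ord.cof.ord, θseq α < θ := fun α hα =>
    (lt_csSup_image_of_strictMonoOn hlim hmono bddAbove_of_small hα).trans_eq hsup
  have hθ_cofinal : ∀ c < θ, ∃ β < θ.ord.cof.ord, ∀ α < θ.ord.cof.ord, β ≤ α → c < θseq α :=
    fun c hc => exists_forall_lt_of_lt_csSup_image hmono.monotoneOn ⟨0, hlim.bot_lt⟩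
      (hc.trans_eq hsup.symm)
  exact ⟨fun h x S hx hS => h.kcc_qSet hκ hθ_cofinal hx hS,
    isNice_of_forall_kcc_qSet (hκ.le.trans (Ordinal.cof_ord_le θ)) hθ_lt⟩

end ChainCondition

/-- `(A,B)` is nice iff for every family `X` of pairwise disjoint
finite subsets of `θ` and every `X`-sequence `S`, the poset `Q(X,S)` is `κ.c.c.` -/
theorem statement4 (θ : Cardinal.{0}) (θseq : Ordinal.{0} → Cardinal.{0})
    (a b : Ordinal.{0} → Set ℕ)
    (hκ : ℵ₀ < θ.ord.cof) (hsing : θ.ord.cof < θ)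
    (hmono : ∀ α β : Ordinal, α < β → β < θ.ord.cof.ord → θseq α < θseq β)
    (hsup : sSup (θseq '' Set.Iio θ.ord.cof.ord) = θ)
    (h0 : θ.ord.cof < θseq 0)
    (hpair : IsPair θ a b) :
    IsNice θ a b ↔
      ∀ x S : Ordinal.{0} → Set Ordinal.{0}, DisjFinFam θ x →
        XSeq θ θseq a b x S → KCC θ.ord.cof (QSet θ a b x S) :=
  statement4_general hκ (fun α _ β hβ hαβ => hmono α β hαβ hβ) hsup
end

section
/- Let (A,B) be a (θ,θ) pair. Then (A,B) is nice if and only if for every n ∈ ℕ, all families X_0, …, X_{n-1}, each consisting of θ-many pairwise disjoint finite subsets of θ, and all sequences S_0, …, S_{n-1} such that S_k is an X_k-sequence for each k < n, the finite product partial order Q(X_0,S_0) × ⋯ × Q(X_{n-1},S_{n-1}) is κ.c.c. -/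
open Cardinal Set

/-- A finite product of such posets is `κ.c.c.`: there is no set of pairwise
incompatible tuples (compatibility taken coordinatewise) of cardinality `κ`. -/
def KCCn (κ : Cardinal.{0}) (n : ℕ) (Q : Fin n → Set (Finset Ordinal.{0})) : Prop :=
  ¬ ∃ A : Set (Fin n → Finset Ordinal.{0}),
      (∀ p ∈ A, ∀ k, p k ∈ Q k) ∧
      (∀ p ∈ A, ∀ q ∈ A, p ≠ q → ¬ ∀ k, p k ∪ q k ∈ Q k) ∧
      #A = Cardinal.lift.{1,0} κ

/-!
Only the following matters about `θ`: `κ = cof θ` is uncountable, and the `θ_α < θ` form a weakly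
increasing sequence cofinal below `θ`.

If `(A,B)` is not nice, take a family `X` with `a(x_i) ∩ b(x_j) = ∅` for all `i, j`. Any `κ`
disjoint subsets of `θ`, each of size `θ`, form an `X`-sequence, and no two singletons are
compatible in the resulting `Q(X,S)`.

Conversely, view a tuple in a product as a finite set of tagged ordinals. An antichain of size `κ`
has a root `r` such that, for every set of fewer than `κ` tagged ordinals, some member properly
extends `r` and meets that set only inside `r` (a weak Δ-system). Hence, for every set `U` of size
`< θ`, there is a member `p` whose coordinates outside `r` are so large that from each of the
corresponding pieces `S_α` an index can be chosen whose `x` avoids `U`. The unions of these `x`'s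
thus contain `θ` many disjoint ones. This contradicts niceness: incompatible `p ≠ q` are separated
at coordinates outside `r`, and for `p = q` the separation is part of being an `X`-sequence.
-/

theorem sigma_univ_injective {ι : Type*} [Fintype ι] {E : ι → Type*} :
    Function.Injective fun p : ∀ i, Finset (E i) => Finset.univ.sigma p := by
  intro p q h
  ext k e
  simpa using Finset.ext_iff.1 h ⟨k, e⟩

section Cardinality

universe u

variable {ι E : Type u} {c : Cardinal.{u}}

theorem exists_le_mk_supersets_forall_insert_lt [DecidableEq E] {B : Set (Finset E)} {m : ℕ}
    (hc : c ≠ 0) (hB : c ≤ #B) (hm : ∀ p ∈ B, p.card ≤ m) :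
    ∃ r : Finset E, c ≤ #{p ∈ B | r ⊆ p} ∧ ∀ e ∉ r, #{p ∈ B | insert e r ⊆ p} < c := by
  obtain ⟨r, hr, hmax⟩ := exists_minimalFor_of_wellFoundedLT
    (fun r : Finset E => c ≤ #{p ∈ B | r ⊆ p}) (fun r => m - r.card) ⟨∅, by simpa using hB⟩
  refine ⟨r, hr, fun e her => not_le.1 fun he => ?_⟩
  obtain ⟨p, hpB, hep⟩ : {p ∈ B | insert e r ⊆ p}.Nonempty := by
    rw [← nonempty_coe_sort, ← mk_ne_zero_iff]
    exact ((pos_iff_ne_zero.2 hc).trans_le he).ne'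
  have hle : m - r.card ≤ m - (insert e r).card := hmax he (Nat.sub_le_sub_left
    (Finset.card_le_card (Finset.subset_insert e r)) m)
  have hlt := (Finset.card_le_card hep).trans (hm p hpB)
  rw [Finset.card_insert_of_notMem her] at hle hlt
  omega

/-- A weak form of the Δ-system lemma which, unlike the latter, holds for every regular uncountable
cardinal. -/
theorem exists_weakDeltaSystem_root (hc : c.IsRegular) (hc' : ℵ₀ < c) {A : Set (Finset E)}
    (hA : c ≤ #A) :
    ∃ r : Finset E, ∀ T : Set E, #T < c → ∃ p ∈ A, r ⊂ p ∧ ∀ e ∈ p, e ∈ T → e ∈ r := by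
  classical
  obtain ⟨m, B, hBA, hB, hm⟩ := infinite_pigeonhole_set (fun p : A => ULift.up.{u} p.1.card) c hA
    hc.aleph0_le (by simpa [hc.cof_ord] using hc')
  obtain ⟨r, hr, hext⟩ := exists_le_mk_supersets_forall_insert_lt hc.ne_zero hB
    (fun p hp => (congrArg ULift.down (hm hp)).le)
  refine ⟨r, fun T hT => ?_⟩
  by_contra! hmeet
  have hcover : {p ∈ B | r ⊆ p} ⊆ {r} ∪ ⋃ e ∈ T \ r, {p ∈ B | insert e r ⊆ p} := by
    rintro p ⟨hpB, hrp⟩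
    obtain rfl | hne := eq_or_ne r p
    · exact .inl rfl
    · obtain ⟨e, hep, heT, her⟩ := hmeet p (hBA hpB) (hrp.ssubset_of_ne hne)
      exact .inr (mem_biUnion ⟨heT, her⟩ ⟨hpB, Finset.insert_subset hep hrp⟩)
  have hsmall : #(⋃ e ∈ T \ r, {p ∈ B | insert e r ⊆ p}) < c :=
    (card_biUnion_lt_iff_forall_of_isRegular hc
      ((mk_le_mk_of_subset sdiff_subset).trans_lt hT)).2 fun e he => hext e he.2
  refine (hr.trans ((mk_le_mk_of_subset hcover).trans (mk_union_le _ _))).not_gt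
    (add_lt_of_lt hc.aleph0_le ?_ hsmall)
  simpa using one_lt_aleph0.trans hc'

theorem mk_preimage_snd_Iio_lt [Finite ι] (hc : ℵ₀ ≤ c) {τ : Ordinal.{u}} (hτ : τ < c.ord) :
    #(Sigma.snd ⁻¹' Iio τ : Set (Σ _ : ι, Ordinal.{u})) < lift.{u + 1} c := by
  have hprod : (Sigma.snd ⁻¹' Iio τ : Set (Σ _ : ι, Ordinal.{u})) =
      Equiv.sigmaEquivProd _ _ ⁻¹' (Set.univ ×ˢ Iio τ) := by
    ext; simp
  rw [hprod, mk_preimage_equiv, mk_congr (Equiv.Set.prod _ _), mk_prod, mk_univ, mk_Iio_ordinal,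
    lift_lift]
  exact mul_lt_of_lt (aleph0_le_lift.2 hc) (lift_lt.2 ((lt_aleph0_of_finite ι).trans_le hc))
    (lift_lt.2 (lt_ord.1 hτ))

theorem mk_iUnion_lt_of_finite (hc : ℵ₀ < c) (hι : #ι < c) {f : ι → Set E}
    (hf : ∀ i, (f i).Finite) : #(⋃ i, f i) < c :=
  calc #(⋃ i, f i) ≤ #ι * ⨆ i, #(f i) := mk_iUnion_le f
    _ ≤ #ι * ℵ₀ := by gcongr; exact ciSup_le' fun i => (lt_aleph0_iff_set_finite.2 (hf i)).le
    _ < c := mul_lt_of_lt hc.le hι hc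

theorem exists_pairwise_disjoint_of_forall_mk_lt [LinearOrder ι] [WellFoundedLT ι] (hc : ℵ₀ < c)
    (hι : ∀ i : ι, #(Iio i) < c) {Y : Set (Set E)} (hfin : ∀ y ∈ Y, y.Finite)
    (hY : ∀ U : Set E, #U < c → ∃ y ∈ Y, Disjoint y U) :
    ∃ f : ι → Set E, (∀ i, f i ∈ Y) ∧ Pairwise (Function.onFun Disjoint f) := by
  have hsmall (i : ι) (g : ∀ j < i, Y) : #(⋃ j : Iio i, (g j j.2 : Set E)) < c :=
    mk_iUnion_lt_of_finite hc (hι i) fun j => hfin _ (g j j.2).2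
  choose pick hpickY hpick using hY
  let f : ι → Y := wellFounded_lt.fix fun i g => ⟨pick _ (hsmall i g), hpickY _ _⟩
  have hf (i : ι) : f i = pick (⋃ j : Iio i, (f j : Set E)) (hsmall i fun j _ => f j) :=
    congrArg Subtype.val (wellFounded_lt.fix_eq (C := fun _ => Y) _ i)
  have hdisj (i j : ι) (hji : j < i) : Disjoint (f i : Set E) (f j) := by
    rw [hf i]
    exact (hpick _ _).mono_right (subset_iUnion_of_subset ⟨j, hji⟩ subset_rfl)
  refine ⟨fun i => f i, fun i => (f i).2, fun i j hij => ?_⟩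
  exact hij.lt_or_gt.elim (fun h => (hdisj j i h).symm) (hdisj i j)

theorem exists_mem_disjoint_of_mk_lt {I : Set ι} {x : ι → Set E} {U : Set E}
    (hx : I.PairwiseDisjoint x) (hU : #U < #I) : ∃ i ∈ I, Disjoint (x i) U := by
  by_contra! h
  choose w hwx hwU using fun i : I => not_disjoint_iff.1 (h i i.2)
  refine hU.not_ge (mk_le_of_injective (f := fun i => (⟨w i, hwU i⟩ : U)) fun i j hij => ?_)
  have hw : w i = w j := congrArg Subtype.val hij
  exact Subtype.ext (hx.elim i.2 j.2 (not_disjoint_iff.2 ⟨w i, hwx i, hw ▸ hwx j⟩))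

theorem exists_pairwiseDisjoint_mk_eq {s : Set ι} {t : Set E} (ht : ℵ₀ ≤ #t) (hst : #s ≤ #t) :
    ∃ S : ι → Set E, s.PairwiseDisjoint S ∧ (∀ i, S i ⊆ t) ∧ ∀ i ∈ s, #(S i) = #t := by
  obtain ⟨g⟩ : #(s × t) ≤ #t := by
    simpa using mul_le_of_le ht hst le_rfl
  have hsub (i : ι) : {z : E | ∃ q : s × t, q.1 = i ∧ g q = z} ⊆ t := by
    rintro _ ⟨q, -, rfl⟩
    exact (g q).2
  refine ⟨fun i => {z | ∃ q : s × t, q.1 = i ∧ g q = z}, ?_, hsub, fun i hi => ?_⟩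
  · refine fun i _ j _ hij => disjoint_left.2 ?_
    rintro _ ⟨q, rfl, rfl⟩ ⟨q', rfl, h⟩
    exact hij (by rw [g.injective (Subtype.ext h)])
  · refine (mk_le_mk_of_subset (hsub i)).antisymm
      (mk_le_of_injective (f := fun e => ⟨g (⟨i, hi⟩, e), _, rfl, rfl⟩) fun e e' h => ?_)
    have hg : g (⟨i, hi⟩, e) = g (⟨i, hi⟩, e') := Subtype.ext (Subtype.mk.inj h)
    exact (Prod.ext_iff.1 (g.injective hg)).2

end Cardinality

section Choice

variable {ι J E : Type*} {X : ι → J → Set E} {T : ι → Set J} {D : Finset ι}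

/-- The sets obtained by choosing an index `i e ∈ T e` for every `e ∈ D` and taking the union of
the corresponding members `X e (i e)` of the families `X e`. -/
def choiceUnions (X : ι → J → Set E) (T : ι → Set J) (D : Finset ι) : Set (Set E) :=
  {y | ∃ i : ι → J, (∀ e ∈ D, i e ∈ T e) ∧ y = ⋃ e ∈ D, X e (i e)}

theorem finite_of_mem_choiceUnions (hX : ∀ e ∈ D, ∀ i ∈ T e, (X e i).Finite) {y : Set E}
    (hy : y ∈ choiceUnions X T D) : y.Finite := by
  obtain ⟨i, hi, rfl⟩ := hy
  exact D.finite_toSet.biUnion fun e he => hX e he (i e) (hi e he)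

theorem subset_of_mem_choiceUnions {s y : Set E} (hX : ∀ e ∈ D, ∀ i ∈ T e, X e i ⊆ s)
    (hy : y ∈ choiceUnions X T D) : y ⊆ s := by
  obtain ⟨i, hi, rfl⟩ := hy
  exact iUnion₂_subset fun e he => hX e he (i e) (hi e he)

theorem exists_subset_of_mem_choiceUnions {y : Set E} (hy : y ∈ choiceUnions X T D) {e : ι}
    (he : e ∈ D) : ∃ i ∈ T e, X e i ⊆ y := by
  obtain ⟨i, hi, rfl⟩ := hy
  exact ⟨i e, hi e he, subset_biUnion_of_mem (u := fun e => X e (i e)) he⟩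

theorem exists_mem_choiceUnions_disjoint [Nonempty J] {U : Set E}
    (hX : ∀ e ∈ D, ∃ i ∈ T e, Disjoint (X e i) U) : ∃ y ∈ choiceUnions X T D, Disjoint y U := by
  choose! i hi hdisj using hX
  exact ⟨_, ⟨i, hi, rfl⟩, disjoint_iUnion₂_left.2 hdisj⟩

end Choice

section Nice

variable {θ : Cardinal.{0}} {θseq : Ordinal.{0} → Cardinal.{0}} {a b : Ordinal.{0} → Set ℕ}

theorem inters_anti_s5 (a : Ordinal.{0} → Set ℕ) {x y : Set Ordinal.{0}} (h : x ⊆ y) :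
    inters a y ⊆ inters a x :=
  biInter_subset_biInter_left h

theorem IsNice.exists_inter_nonempty (hnice : IsNice θ a b) (hθ : ℵ₀ < θ)
    {Y : Set (Set Ordinal.{0})} (hfin : ∀ y ∈ Y, y.Finite) (hsub : ∀ y ∈ Y, y ⊆ Iio θ.ord)
    (hY : ∀ U : Set Ordinal.{0}, #U < lift.{1} θ → ∃ y ∈ Y, Disjoint y U) :
    ∃ y ∈ Y, ∃ y' ∈ Y, (inters a y ∩ inters b y').Nonempty := by
  have hIio (ξ : Iio θ.ord) : #(Iio ξ) < lift.{1} θ := by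
    have hle : #(Iio ξ) ≤ #(Iio ξ.1) :=
      mk_le_of_injective (f := fun η => ⟨η.1.1, η.2⟩) fun η η' h =>
        Subtype.ext (Subtype.ext (Subtype.mk.inj h))
    rw [mk_Iio_ordinal] at hle
    exact hle.trans_lt (lift_lt.2 (lt_ord.1 ξ.2))
  obtain ⟨f, hfY, hf⟩ := exists_pairwise_disjoint_of_forall_mk_lt (aleph0_lt_lift.2 hθ) hIio hfin hY
  let f' : Ordinal → Set Ordinal := Function.extend Subtype.val f fun _ => ∅
  have hf' (ξ : Iio θ.ord) : f' ξ = f ξ := Subtype.val_injective.extend_apply f _ ξ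
  have hdisj : DisjFinFam θ f' := by
    refine ⟨fun ξ hξ => ?_, fun ξ hξ η hη hne => ?_⟩
    · rw [hf' ⟨ξ, hξ⟩]
      exact ⟨hfin _ (hfY _), hsub _ (hfY _)⟩
    · rw [hf' ⟨ξ, hξ⟩, hf' ⟨η, hη⟩]
      exact hf fun h => hne (congrArg Subtype.val h)
  obtain ⟨ξ, hξ, η, hη, h⟩ := hnice f' hdisj
  rw [hf' ⟨ξ, hξ⟩, hf' ⟨η, hη⟩] at h
  exact ⟨_, hfY _, _, hfY _, h⟩

/-- The relation between `α` and `β` required in the definition of `QSet`: membership in `Q(X,S)`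
says that a finite set is a clique for this (symmetric) relation. -/
def Linked (a b : Ordinal.{0} → Set ℕ) (x S : Ordinal.{0} → Set Ordinal.{0})
    (α β : Ordinal.{0}) : Prop :=
  ∃ i ∈ S α, ∃ j ∈ S β, (inters a (x i) ∩ inters b (x j)).Nonempty ∨
    (inters b (x i) ∩ inters a (x j)).Nonempty

variable {x S : Ordinal.{0} → Set Ordinal.{0}} {F K : Finset Ordinal.{0}}

theorem mem_QSet_iff : F ∈ QSet θ a b x S ↔
    (∀ α ∈ F, α < θ.ord.cof.ord) ∧ (F : Set Ordinal).Pairwise (Linked a b x S) :=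
  Iff.rfl

instance Linked.instSymm : Std.Symm (Linked a b x S) where
  symm := by
    rintro α β ⟨i, hi, j, hj, h | h⟩
    · exact ⟨j, hj, i, hi, .inr (inter_comm _ _ ▸ h)⟩
    · exact ⟨j, hj, i, hi, .inl (inter_comm _ _ ▸ h)⟩

theorem exists_sdiff_not_linked_of_union_notMem (hF : F ∈ QSet θ a b x S)
    (hK : K ∈ QSet θ a b x S) (hFK : F ∪ K ∉ QSet θ a b x S) :
    ∃ α ∈ F \ K, ∃ β ∈ K \ F, ¬ Linked a b x S α β := by
  rw [mem_QSet_iff] at hF hK hFK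
  by_contra! hlinked
  refine hFK ⟨fun α hα => (Finset.mem_union.1 hα).elim (hF.1 α) (hK.1 α), ?_⟩
  rw [Finset.coe_union, pairwise_union_of_symm]
  refine ⟨hF.2, hK.2, fun α hα β hβ hne => ?_⟩
  by_cases hαK : α ∈ K
  · exact hK.2 hαK hβ hne
  by_cases hβF : β ∈ F
  · exact hF.2 hα hβF hne
  exact hlinked α (Finset.mem_sdiff.2 ⟨hα, hαK⟩) β (Finset.mem_sdiff.2 ⟨hβ, hβF⟩)

theorem not_linked_iff {α β : Ordinal.{0}} : ¬ Linked a b x S α β ↔ ∀ i ∈ S α, ∀ j ∈ S β,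
    inters a (x i) ∩ inters b (x j) = ∅ ∧ inters a (x j) ∩ inters b (x i) = ∅ := by
  simp only [Linked, not_exists, not_and, not_or, not_nonempty_iff_eq_empty,
    inter_comm (inters b _)]

theorem inters_inter_inters_eq_empty_of_mem_choiceUnions {ι : Type*}
    {X : ι → Ordinal.{0} → Set Ordinal.{0}} {T : ι → Set Ordinal.{0}} {D D' : Finset ι}
    {y y' : Set Ordinal.{0}} (hy : y ∈ choiceUnions X T D) (hy' : y' ∈ choiceUnions X T D')
    {e e' : ι} (he : e ∈ D) (he' : e' ∈ D')
    (h : ∀ i ∈ T e, ∀ j ∈ T e', inters a (X e i) ∩ inters b (X e' j) = ∅) :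
    inters a y ∩ inters b y' = ∅ := by
  obtain ⟨i, hi, hiy⟩ := exists_subset_of_mem_choiceUnions hy he
  obtain ⟨j, hj, hjy'⟩ := exists_subset_of_mem_choiceUnions hy' he'
  exact subset_empty_iff.1 <|
    h i hi j hj ▸ inter_subset_inter (inters_anti_s5 a hiy) (inters_anti_s5 b hjy')

section Product

variable {ι : Type*} {x S : ι → Ordinal.{0} → Set Ordinal.{0}}

theorem inters_inter_inters_eq_empty_of_incompatible [Fintype ι] [DecidableEq ι]
    {p q : ι → Finset Ordinal.{0}} {r : Finset (Σ _ : ι, Ordinal.{0})}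
    (hp : ∀ k, p k ∈ QSet θ a b (x k) (S k))
    (hq : ∀ k, q k ∈ QSet θ a b (x k) (S k))
    (hpq : ¬ ∀ k, p k ∪ q k ∈ QSet θ a b (x k) (S k))
    (hrp : r ⊆ Finset.univ.sigma p) (hrq : r ⊆ Finset.univ.sigma q) {y y' : Set Ordinal.{0}}
    (hy : y ∈ choiceUnions (fun e => x e.1) (fun e => S e.1 e.2) (Finset.univ.sigma p \ r))
    (hy' : y' ∈ choiceUnions (fun e => x e.1) (fun e => S e.1 e.2) (Finset.univ.sigma q \ r)) :
    inters a y ∩ inters b y' = ∅ := by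
  obtain ⟨k, hk⟩ := not_forall.1 hpq
  obtain ⟨α, hα, β, hβ, hαβ⟩ := exists_sdiff_not_linked_of_union_notMem (hp k) (hq k) hk
  rw [Finset.mem_sdiff] at hα hβ
  have hαD : ⟨k, α⟩ ∈ Finset.univ.sigma p \ r :=
    Finset.mem_sdiff.2 ⟨by simpa using hα.1, fun h => hα.2 (by simpa using hrq h)⟩
  have hβD : ⟨k, β⟩ ∈ Finset.univ.sigma q \ r :=
    Finset.mem_sdiff.2 ⟨by simpa using hβ.1, fun h => hβ.2 (by simpa using hrp h)⟩
  exact inters_inter_inters_eq_empty_of_mem_choiceUnions hy hy' hαD hβD fun i hi j hj =>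
    (not_linked_iff.1 hαβ i hi j hj).1

theorem exists_mem_choiceUnions_disjoint_of_mk_le (hmono : MonotoneOn θseq (Iio θ.ord.cof.ord))
    (hx : ∀ k, DisjFinFam θ (x k)) (hS : ∀ k, XSeq θ θseq a b (x k) (S k))
    {D : Finset (Σ _ : ι, Ordinal.{0})} {τ : Ordinal.{0}}
    (hD : ∀ e ∈ D, τ ≤ e.2 ∧ e.2 < θ.ord.cof.ord) {U : Set Ordinal.{0}}
    (hU : #U ≤ lift.{1} (θseq τ)) :
    ∃ y ∈ choiceUnions (fun e => x e.1) (fun e => S e.1 e.2) D, Disjoint y U := by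
  refine exists_mem_choiceUnions_disjoint fun ⟨k, α⟩ he => ?_
  obtain ⟨hτα, hα⟩ := hD _ he
  obtain ⟨hsub, -, hlarge, -⟩ := hS k
  refine exists_mem_disjoint_of_mk_lt
    (fun i hi j hj => (hx k).2 i (hsub α hα hi) j (hsub α hα hj)) ?_
  exact (hU.trans (lift_le.2 (hmono (hτα.trans_lt hα) hα hτα))).trans_lt (hlarge α hα)

end Product

theorem IsNice.KCCn_QSet {n : ℕ} {x S : Fin n → Ordinal.{0} → Set Ordinal.{0}}
    (hnice : IsNice θ a b) (hκ : ℵ₀ < θ.ord.cof) (hmono : MonotoneOn θseq (Iio θ.ord.cof.ord))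
    (hcofinal : IsCofinalFor (Iio θ) (θseq '' Iio θ.ord.cof.ord))
    (hx : ∀ k, DisjFinFam θ (x k)) (hS : ∀ k, XSeq θ θseq a b (x k) (S k)) :
    KCCn θ.ord.cof n fun k => QSet θ a b (x k) (S k) := by
  rintro ⟨A, hAQ, hAanti, hAcard⟩
  have hθ : ℵ₀ < θ := hκ.trans_le (Ordinal.cof_ord_le θ)
  have hreg : θ.ord.cof.IsRegular := isRegular_cof (isSuccLimit_ord hθ.le)
  obtain ⟨r, hr⟩ := exists_weakDeltaSystem_root hreg.lift (aleph0_lt_lift.2 hκ)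
    (A := (fun p => Finset.univ.sigma p) '' A) (by rw [mk_image_eq sigma_univ_injective, hAcard])
  let Y : Set (Set Ordinal) := {y | ∃ p ∈ A, r ⊂ Finset.univ.sigma p ∧
    y ∈ choiceUnions (fun e => x e.1) (fun e => S e.1 e.2) (Finset.univ.sigma p \ r)}
  have hltκ {p} (hp : p ∈ A) {e} (he : e ∈ Finset.univ.sigma p \ r) : e.2 < θ.ord.cof.ord :=
    (hAQ p hp e.1).1 e.2 (Finset.mem_sigma.1 (Finset.mem_sdiff.1 he).1).2
  have hfam {p} (hp : p ∈ A) {e} (he : e ∈ Finset.univ.sigma p \ r) {i} (hi : i ∈ S e.1 e.2) :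
      (x e.1 i).Finite ∧ x e.1 i ⊆ Iio θ.ord :=
    (hx e.1).1 i ((hS e.1).1 e.2 (hltκ hp he) hi)
  have hfin : ∀ y ∈ Y, y.Finite := fun y ⟨p, hp, _, hy⟩ =>
    finite_of_mem_choiceUnions (fun e he i hi => (hfam hp he hi).1) hy
  have hsub : ∀ y ∈ Y, y ⊆ Iio θ.ord := fun y ⟨p, hp, _, hy⟩ =>
    subset_of_mem_choiceUnions (fun e he i hi => (hfam hp he hi).2) hy
  have havoid : ∀ U : Set Ordinal, #U < lift.{1} θ → ∃ y ∈ Y, Disjoint y U := by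
    intro U hU
    obtain ⟨u, hu⟩ := mem_range_lift_of_le hU.le
    obtain ⟨_, ⟨τ, hτ, rfl⟩, huτ⟩ := hcofinal (lift_lt.1 (hu ▸ hU))
    obtain ⟨_, ⟨p, hp, rfl⟩, hrp, hpr⟩ := hr _ (mk_preimage_snd_Iio_lt hreg.aleph0_le hτ)
    obtain ⟨y, hy, hyU⟩ := exists_mem_choiceUnions_disjoint_of_mk_le hmono hx hS
      (D := Finset.univ.sigma p \ r) (τ := τ)
      (fun e he => ⟨not_lt.1 fun heτ => (Finset.mem_sdiff.1 he).2
        (hpr e (Finset.mem_sdiff.1 he).1 heτ), hltκ hp he⟩) (hu ▸ lift_le.2 huτ)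
    exact ⟨y, ⟨p, hp, hrp, hy⟩, hyU⟩
  obtain ⟨y, ⟨p, hp, hrp, hy⟩, y', ⟨q, hq, hrq, hy'⟩, hmeet⟩ :=
    hnice.exists_inter_nonempty hθ hfin hsub havoid
  refine hmeet.ne_empty ?_
  obtain rfl | hpq := eq_or_ne p q
  · obtain ⟨e, hep, her⟩ := Finset.exists_of_ssubset hrp
    have he := Finset.mem_sdiff.2 ⟨hep, her⟩
    exact inters_inter_inters_eq_empty_of_mem_choiceUnions hy hy' he he
      ((hS e.1).2.2.2 e.2 (hltκ hp he))
  · exact inters_inter_inters_eq_empty_of_incompatible (hAQ p hp) (hAQ q hq)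
      (hAanti p hp q hq hpq) hrp.subset hrq.subset hy hy'

theorem exists_XSeq_of_forall_inter_eq_empty (hθ : ℵ₀ ≤ θ)
    (hlt : MapsTo θseq (Iio θ.ord.cof.ord) (Iio θ))
    (hx : ∀ i < θ.ord, ∀ j < θ.ord, inters a (x i) ∩ inters b (x j) = ∅) :
    ∃ S, XSeq θ θseq a b x S := by
  obtain ⟨S, hdisj, hsub, hcard⟩ :=
    exists_pairwiseDisjoint_mk_eq (s := Iio θ.ord.cof.ord) (t := Iio θ.ord)
      (by simpa [mk_Iio_ordinal] using hθ) (by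
        rw [mk_Iio_ordinal, mk_Iio_ordinal, card_ord, card_ord, lift_le]
        exact Ordinal.cof_ord_le θ)
  refine ⟨S, fun α _ => hsub α, fun α hα β hβ hne => hdisj hα hβ hne, fun α hα => ?_,
    fun α _ i hi j hj => hx i (hsub α hi) j (hsub α hj)⟩
  rw [hcard α hα, mk_Iio_ordinal, card_ord, lift_lt]
  exact hlt hα

theorem not_KCCn_QSet_of_forall_not_linked
    (h : ∀ α < θ.ord.cof.ord, ∀ β < θ.ord.cof.ord, ¬ Linked a b x S α β) :
    ¬ KCCn θ.ord.cof 1 fun _ => QSet θ a b x S := by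
  refine not_not.2 ⟨(fun α _ => {α}) '' Iio θ.ord.cof.ord, ?_, ?_, ?_⟩
  · rintro _ ⟨α, hα, rfl⟩ -
    exact mem_QSet_iff.2 ⟨by simpa using hα, by simp⟩
  · rintro _ ⟨α, hα, rfl⟩ _ ⟨β, hβ, rfl⟩ hne hcompat
    exact h α hα β hβ ((hcompat 0).2 α (by simp) β (by simp) fun hαβ => hne (by rw [hαβ]))
  · rw [mk_image_eq fun α β hαβ => by simpa using congrFun hαβ 0, mk_Iio_ordinal, card_ord]

theorem isNice_of_forall_KCCn_QSet (hθ : ℵ₀ ≤ θ) (hlt : MapsTo θseq (Iio θ.ord.cof.ord) (Iio θ))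
    (hKCC : ∀ x S, DisjFinFam θ x → XSeq θ θseq a b x S →
      KCCn θ.ord.cof 1 fun _ => QSet θ a b x S) : IsNice θ a b := by
  intro x hx
  by_contra! hempty
  obtain ⟨S, hS⟩ := exists_XSeq_of_forall_inter_eq_empty hθ hlt hempty
  refine not_KCCn_QSet_of_forall_not_linked (fun α hα β hβ => ?_) (hKCC x S hx hS)
  refine not_linked_iff.2 fun i hi j hj => ?_
  have hi := hS.1 α hα hi
  have hj := hS.1 β hβ hj
  exact ⟨hempty i hi j hj, hempty j hj i hi⟩

end Nice

theorem mapsTo_Iio_of_strictMonoOn_of_isLUB {α β : Type*} [LinearOrder α] [SuccOrder α]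
    [Preorder β] {f : α → β} {o : α} {l : β} (ho : Order.IsSuccLimit o)
    (hf : StrictMonoOn f (Iio o)) (hl : IsLUB (f '' Iio o) l) : MapsTo f (Iio o) (Iio l) := by
  intro i hi
  have hsucc : Order.succ i < o := ho.succ_lt hi
  exact (hf hi hsucc (Order.lt_succ_of_not_isMax hi.not_isMax)).trans_le
    (hl.1 (mem_image_of_mem f hsucc))

theorem isCofinalFor_Iio_of_isLUB {β : Type*} [LinearOrder β] {s : Set β} {l : β}
    (hl : IsLUB s l) : IsCofinalFor (Iio l) s := fun _ hb =>
  let ⟨c, hc, hbc⟩ := (lt_isLUB_iff hl).1 hb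
  ⟨c, hc, hbc.le⟩

theorem statement5_general (θ : Cardinal.{0}) (θseq : Ordinal.{0} → Cardinal.{0})
    (a b : Ordinal.{0} → Set ℕ) (hκ : ℵ₀ < θ.ord.cof)
    (hmono : MonotoneOn θseq (Iio θ.ord.cof.ord))
    (hlt : MapsTo θseq (Iio θ.ord.cof.ord) (Iio θ))
    (hcofinal : IsCofinalFor (Iio θ) (θseq '' Iio θ.ord.cof.ord)) :
    IsNice θ a b ↔
      ∀ (n : ℕ) (x S : Fin n → Ordinal.{0} → Set Ordinal.{0}),
        (∀ k, DisjFinFam θ (x k)) → (∀ k, XSeq θ θseq a b (x k) (S k)) →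
        KCCn θ.ord.cof n (fun k => QSet θ a b (x k) (S k)) :=
  ⟨fun hnice _ _ _ => hnice.KCCn_QSet hκ hmono hcofinal,
    fun hKCC => isNice_of_forall_KCCn_QSet (hκ.le.trans (Ordinal.cof_ord_le θ)) hlt fun _ _ hx hS =>
      hKCC 1 _ _ (fun _ => hx) fun _ => hS⟩

/-- `(A,B)` is nice iff every finite product
`Q(X₀,S₀) × ⋯ × Q(Xₙ₋₁,Sₙ₋₁)` is `κ.c.c.` -/
theorem statement5 (θ : Cardinal.{0}) (θseq : Ordinal.{0} → Cardinal.{0})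
    (a b : Ordinal.{0} → Set ℕ)
    (hκ : ℵ₀ < θ.ord.cof) (hsing : θ.ord.cof < θ)
    (hmono : ∀ α β : Ordinal, α < β → β < θ.ord.cof.ord → θseq α < θseq β)
    (hsup : sSup (θseq '' Set.Iio θ.ord.cof.ord) = θ)
    (h0 : θ.ord.cof < θseq 0)
    (hpair : IsPair θ a b) :
    IsNice θ a b ↔
      ∀ (n : ℕ) (x S : Fin n → Ordinal.{0} → Set Ordinal.{0}),
        (∀ k, DisjFinFam θ (x k)) → (∀ k, XSeq θ θseq a b (x k) (S k)) →
        KCCn θ.ord.cof n (fun k => QSet θ a b (x k) (S k)) := by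
  have hstrict : StrictMonoOn θseq (Iio θ.ord.cof.ord) := fun α _ β hβ h => hmono α β h hβ
  have hlub : IsLUB (θseq '' Iio θ.ord.cof.ord) θ := by
    simpa only [hsup] using isLUB_csSup
      (Nonempty.image θseq ⟨0, mem_Iio.2 (ord_pos.2 (aleph0_pos.trans hκ))⟩) bddAbove_of_small
  exact statement5_general θ θseq a b hκ hstrict.monotoneOn
    (mapsTo_Iio_of_strictMonoOn_of_isLUB (isSuccLimit_ord hκ.le) hstrict hlub)
    (isCofinalFor_Iio_of_isLUB hlub)
end
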